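/- Any two terminal Fano polygons in Z^2 (not merely up to unimodular equivalence) are connected by a finite chain of terminal Fano polygons in which each consecutive pair is related by inclusion. -/

import Mathlib

open Set

/-- A lattice point of `ℤ^d ⊆ ℝ^d`. -/
def IsLatticePoint {d : ℕ} (x : Fin d → ℝ) : Prop := ∀ i, ∃ n : ℤ, x i = (n : ℝ)

/-- A lattice polytope: the convex hull of finitely many lattice points. -/
def IsLatticePolytope {d : ℕ} (P : Set (Fin d → ℝ)) : Prop :=
  ∃ S : Finset (Fin d → ℝ), (∀ x ∈ S, IsLatticePoint x) ∧ P = convexHull ℝ (S : Set (Fin d → ℝ))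

/-- The polar dual `P* = {u | ⟨u,v⟩ ≥ -1 for all v ∈ P}`. -/
def polarDual {d : ℕ} (P : Set (Fin d → ℝ)) : Set (Fin d → ℝ) :=
  {u | ∀ v ∈ P, (-1 : ℝ) ≤ ∑ i, u i * v i}

/-- `[P]`: the convex hull of the lattice points of `P`. -/
def latticeHull {d : ℕ} (P : Set (Fin d → ℝ)) : Set (Fin d → ℝ) :=
  convexHull ℝ {x ∈ P | IsLatticePoint x}

/-- A primitive lattice point. -/
def IsPrimitivePt {d : ℕ} (x : Fin d → ℝ) : Prop :=
  IsLatticePoint x ∧ x ≠ 0 ∧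
    ∀ (n : ℕ) (u : Fin d → ℝ), IsLatticePoint u → x = n • u → n = 1

/-- A Fano polytope: a lattice polytope with the origin as interior point,
all of whose vertices are primitive lattice points. -/
def IsFanoPolytope {d : ℕ} (P : Set (Fin d → ℝ)) : Prop :=
  IsLatticePolytope P ∧ 0 ∈ interior P ∧ ∀ v ∈ Set.extremePoints ℝ P, IsPrimitivePt v

/-- Canonical: the origin is the unique interior lattice point. -/
def IsCanonical {d : ℕ} (P : Set (Fin d → ℝ)) : Prop :=
  ∀ x ∈ interior P, IsLatticePoint x → x = 0

/-- Terminal: the lattice points are exactly the vertices together with the origin. -/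
def IsTerminal {d : ℕ} (P : Set (Fin d → ℝ)) : Prop :=
  {x ∈ P | IsLatticePoint x} = Set.extremePoints ℝ P ∪ {0}

/-- A terminal Fano polygon. -/
def IsTerminalFano (P : Set (Fin 2 → ℝ)) : Prop := IsFanoPolytope P ∧ IsTerminal P

/-!
If `u` and `v` are lattice points of a terminal Fano polygon `P`, then the triangle `0, u, v`
contains no further lattice points, so `|det (u, v)| ≤ 1`. Choosing `u, v` with determinant `1` as
a new basis of `ℤ²` moves `P` by an element of `SL(2, ℤ)` so that it contains both unit vectors.
Then all coordinates of its lattice points lie in `{-1, 0, 1}`, and as `det ((1, -1), (1, 1)) = 2`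
these points cannot occupy both open pairs of opposite quadrants. Hence `P` sits, possibly after a
quarter turn, in the hexagon spanned by the units of the Eisenstein integers, which also contains
the standard square.

It remains to connect the standard square to its images under `SL(2, ℤ)`. As the action preserves
inclusions, it is enough to treat the generators `S` and `T`: the former preserves the square, the
latter sends it into the hexagon.
-/

open Bornology ModularGroup
open scoped MatrixGroups

section LatticePolytope

variable {d : ℕ} {P Q K : Set (Fin d → ℝ)} {x : Fin d → ℝ}

/-- The lattice `ℤ^d ⊆ ℝ^d` as an additive subgroup. -/
def integerLattice (d : ℕ) : AddSubgroup (Fin d → ℝ) where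
  carrier := {x | IsLatticePoint x}
  add_mem' hx hy i := by
    obtain ⟨⟨m, hm⟩, n, hn⟩ := hx i, hy i
    exact ⟨m + n, by simp [hm, hn]⟩
  zero_mem' _ := ⟨0, by simp⟩
  neg_mem' hx i := by
    obtain ⟨m, hm⟩ := hx i
    exact ⟨-m, by simp [hm]⟩

lemma isLatticePoint_iff_exists_intCast :
    IsLatticePoint x ↔ ∃ n : Fin d → ℤ, x = fun i => (n i : ℝ) := by
  simp only [IsLatticePoint, Classical.skolem, funext_iff]

lemma isLatticePoint_iff_exists_pair {x : Fin 2 → ℝ} :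
    IsLatticePoint x ↔ ∃ m n : ℤ, x = ![(m : ℝ), (n : ℝ)] := by
  simp [IsLatticePoint, Fin.forall_fin_two, funext_iff]

lemma finite_isLatticePoint_of_isBounded (hK : IsBounded K) :
    {x ∈ K | IsLatticePoint x}.Finite := by
  have hcast : Isometry fun (n : Fin d → ℤ) i => (n i : ℝ) :=
    Isometry.piMap (fun _ => ((↑) : ℤ → ℝ)) fun _ => Isometry.of_dist_eq Int.dist_cast_real
  have hfin : ((fun (n : Fin d → ℤ) i => (n i : ℝ)) ⁻¹' K).Finite :=
    (Metric.isCompact_of_isClosed_isBounded (isClosed_discrete _)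
      (hcast.antilipschitz.isBounded_preimage hK)).finite_of_discrete
  refine (hfin.image fun n i => (n i : ℝ)).subset ?_
  rintro x ⟨hxK, hx⟩
  obtain ⟨n, rfl⟩ := isLatticePoint_iff_exists_intCast.1 hx
  exact ⟨n, hxK, rfl⟩

lemma isLatticePolytope_convexHull {S : Set (Fin d → ℝ)} (hS : S.Finite)
    (hlattice : ∀ x ∈ S, IsLatticePoint x) : IsLatticePolytope (convexHull ℝ S) :=
  ⟨hS.toFinset, by simpa using hlattice, by simp⟩

lemma isLatticePolytope_latticeHull (hK : IsBounded K) : IsLatticePolytope (latticeHull K) :=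
  isLatticePolytope_convexHull (finite_isLatticePoint_of_isBounded hK) fun _ hx => hx.2

namespace IsLatticePolytope

lemma convex (hP : IsLatticePolytope P) : Convex ℝ P := by
  obtain ⟨S, -, rfl⟩ := hP
  exact convex_convexHull ℝ _

lemma isLatticePoint_of_mem_extremePoints (hP : IsLatticePolytope P)
    (hx : x ∈ extremePoints ℝ P) : IsLatticePoint x := by
  obtain ⟨S, hS, rfl⟩ := hP
  exact hS x (extremePoints_convexHull_subset hx)

lemma latticeHull_eq (hP : IsLatticePolytope P) : latticeHull P = P := by
  refine (convexHull_min (sep_subset _ _) hP.convex).antisymm ?_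
  obtain ⟨S, hS, rfl⟩ := hP
  exact convexHull_mono fun x hx => ⟨subset_convexHull ℝ _ hx, hS x hx⟩

lemma subset_latticeHull (hP : IsLatticePolytope P) (h : ∀ x ∈ P, IsLatticePoint x → x ∈ K) :
    P ⊆ latticeHull K :=
  hP.latticeHull_eq.symm.subset.trans <| convexHull_mono fun x hx => ⟨h x hx.1 hx.2, hx.2⟩

lemma isTerminal_of_subset (hP : IsLatticePolytope P) (h0 : 0 ∈ P) (hPK : P ⊆ K)
    (hK : {x ∈ K | IsLatticePoint x} ⊆ extremePoints ℝ K ∪ {0}) : IsTerminal P := by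
  apply Subset.antisymm
  · rintro x ⟨hxP, hx⟩
    exact (hK ⟨hPK hxP, hx⟩).imp_left fun hxK =>
      inter_extremePoints_subset_extremePoints_of_subset hPK ⟨hxP, hxK⟩
  · rintro x (hx | rfl)
    · exact ⟨hx.1, hP.isLatticePoint_of_mem_extremePoints hx⟩
    · exact ⟨h0, (integerLattice d).zero_mem⟩

end IsLatticePolytope

lemma IsTerminal.mem_of_mem_convexHull (hP : IsTerminal P) (hconv : Convex ℝ P)
    {S : Set (Fin d → ℝ)} (hSP : S ⊆ P) (h0 : 0 ∈ S) (hxS : x ∈ convexHull ℝ S)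
    (hx : IsLatticePoint x) : x ∈ S := by
  have hhull : convexHull ℝ S ⊆ P := convexHull_min hSP hconv
  rcases hP.subset ⟨hhull hxS, hx⟩ with hext | rfl
  · exact extremePoints_convexHull_subset
      (inter_extremePoints_subset_extremePoints_of_subset hhull ⟨hxS, hext⟩)
  · exact h0

lemma IsTerminal.isPrimitivePt (hP : IsTerminal P) (hconv : Convex ℝ P) (h0 : 0 ∈ P)
    (hxP : x ∈ P) (hx : IsLatticePoint x) (hx0 : x ≠ 0) : IsPrimitivePt x := by
  refine ⟨hx, hx0, fun n u hu hxu => ?_⟩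
  have hn : n ≠ 0 := by rintro rfl; exact hx0 (by simpa using hxu)
  have hux : u = (1 - (n : ℝ)⁻¹) • 0 + (n : ℝ)⁻¹ • x := by
    rw [hxu, ← Nat.cast_smul_eq_nsmul ℝ]
    simp [hn]
  have hmem : u ∈ convexHull ℝ {0, x} := by
    rw [convexHull_pair]
    exact ⟨_, _, by simpa using Nat.cast_inv_le_one n, by positivity, by ring, hux.symm⟩
  rcases hP.mem_of_mem_convexHull hconv (pair_subset h0 hxP) (by simp) hmem hu with rfl | rfl
  · exact absurd (by simpa using hxu) hx0
  · have : (n : ℝ) • u = (1 : ℝ) • u := by rw [Nat.cast_smul_eq_nsmul, ← hxu, one_smul]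
    exact_mod_cast smul_left_injective ℝ hx0 this

lemma IsLatticePolytope.isFanoPolytope [NeZero d] (hP : IsLatticePolytope P)
    (h0 : 0 ∈ interior P) (hterm : IsTerminal P) : IsFanoPolytope P := by
  refine ⟨hP, h0, fun v hv => hterm.isPrimitivePt hP.convex (interior_subset h0) hv.1
    (hP.isLatticePoint_of_mem_extremePoints hv) ?_⟩
  rintro rfl
  exact (disjoint_interior_extremePoints P).le_bot ⟨h0, hv⟩

lemma IsLatticePolytope.exists_linearIndependent (hP : IsLatticePolytope P)
    (hint : (interior P).Nonempty) :
    ∃ v : Fin d → Fin d → ℝ, (∀ i, v i ∈ P ∧ IsLatticePoint (v i)) ∧ LinearIndependent ℝ v := by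
  have hspan : Submodule.span ℝ {x ∈ P | IsLatticePoint x} = ⊤ := by
    refine Submodule.eq_top_of_nonempty_interior' _ (hint.mono (interior_mono ?_))
    conv_lhs => rw [← hP.latticeHull_eq]
    exact convexHull_min Submodule.subset_span (Submodule.convex _)
  obtain ⟨v, hv, -, hind⟩ :=
    Submodule.exists_fun_fin_finrank_span_eq ℝ {x ∈ P | IsLatticePoint x}
  have hd : d = Module.finrank ℝ (Submodule.span ℝ {x ∈ P | IsLatticePoint x}) := by
    rw [hspan, finrank_top, Module.finrank_fin_fun]
  exact ⟨v ∘ Fin.cast hd, fun i => hv _, hind.comp _ (Fin.cast_injective hd)⟩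

end LatticePolytope

section EmptyTriangle

variable {E : Type*} [AddCommGroup E] [Module ℝ E] {L : AddSubgroup E} {u v : E} {a b : ℝ}

lemma smul_add_smul_mem_convexHull (ha : 0 ≤ a) (hb : 0 ≤ b) (hab : a + b ≤ 1) :
    a • u + b • v ∈ convexHull ℝ {0, u, v} := by
  have hmem := (convex_convexHull ℝ {0, u, v}).sum_mem (t := Finset.univ)
    (w := ![1 - a - b, a, b]) (z := ![0, u, v])
    (by simp [Fin.forall_fin_succ, ha, hb, le_sub_iff_add_le', hab])
    (by simp only [Fin.sum_univ_three, Matrix.cons_val]; ring)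
    (fun i _ => subset_convexHull ℝ _ (by fin_cases i <;> simp))
  simpa [Fin.sum_univ_three] using hmem

lemma coeff_eq_zero_of_mem_triangle (huv : LinearIndependent ℝ ![u, v])
    (hempty : ∀ x ∈ convexHull ℝ {0, u, v}, x ∈ L → x ∈ ({0, u, v} : Set E))
    (ha : 0 ≤ a) (hb : 0 ≤ b) (ha1 : a < 1) (hb1 : b < 1) (hab : a + b ≤ 1)
    (hx : a • u + b • v ∈ L) : a = 0 ∧ b = 0 := by
  rcases hempty _ (smul_add_smul_mem_convexHull ha hb hab) hx with h | h | h
  · exact huv.eq_of_pair (by simpa using h)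
  · exact absurd (huv.eq_of_pair (s' := 1) (t' := 0) (by simpa using h)).1 ha1.ne
  · exact absurd (huv.eq_of_pair (s' := 0) (t' := 1) (by simpa using h)).2 hb1.ne

lemma exists_int_coeff_of_empty_triangle (huv : LinearIndependent ℝ ![u, v])
    (hempty : ∀ x ∈ convexHull ℝ {0, u, v}, x ∈ L → x ∈ ({0, u, v} : Set E))
    (hu : u ∈ L) (hv : v ∈ L) (hx : a • u + b • v ∈ L) : ∃ m n : ℤ, a = m ∧ b = n := by
  have hfract : Int.fract a • u + Int.fract b • v ∈ L := by
    have : Int.fract a • u + Int.fract b • v = a • u + b • v - (⌊a⌋ • u + ⌊b⌋ • v) := by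
      simp only [Int.fract]
      module
    rw [this]
    exact L.sub_mem hx (L.add_mem (L.zsmul_mem hu _) (L.zsmul_mem hv _))
  have ha := Int.fract_nonneg a
  have hb := Int.fract_nonneg b
  have ha1 := Int.fract_lt_one a
  have hb1 := Int.fract_lt_one b
  suffices Int.fract a = 0 ∧ Int.fract b = 0 from
    ⟨⌊a⌋, ⌊b⌋, by linarith [Int.floor_add_fract a], by linarith [Int.floor_add_fract b]⟩
  rcases le_or_gt (Int.fract a + Int.fract b) 1 with hab | hab
  · exact coeff_eq_zero_of_mem_triangle huv hempty ha hb ha1 hb1 hab hfract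
  · -- The point reflection `x ↦ u + v - x` maps the other half of the parallelogram to this one.
    have hreflect : (1 - Int.fract a) • u + (1 - Int.fract b) • v ∈ L := by
      have : (1 - Int.fract a) • u + (1 - Int.fract b) • v =
          u + v - (Int.fract a • u + Int.fract b • v) := by module
      rw [this]
      exact L.sub_mem (L.add_mem hu hv) hfract
    have := coeff_eq_zero_of_mem_triangle huv hempty (by linarith) (by linarith) (by linarith)
      (by linarith) (by linarith) hreflect
    linarith

end EmptyTriangle

section PlanarDet

/-- The determinant `det (u, v)` of two vectors of the plane, the signed area of the
parallelogram that they span. -/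
def planarDet (u v : Fin 2 → ℝ) : ℝ := u 0 * v 1 - u 1 * v 0

variable {P : Set (Fin 2 → ℝ)} {u v : Fin 2 → ℝ}

lemma IsLatticePoint.exists_planarDet_eq (hu : IsLatticePoint u) (hv : IsLatticePoint v) :
    ∃ n : ℤ, planarDet u v = n := by
  obtain ⟨⟨a, ha⟩, b, hb⟩ := hu 0, hu 1
  obtain ⟨⟨c, hc⟩, d, hd⟩ := hv 0, hv 1
  exact ⟨a * d - b * c, by simp [planarDet, *]⟩

lemma linearIndependent_pair_iff_planarDet_ne_zero :
    LinearIndependent ℝ ![u, v] ↔ planarDet u v ≠ 0 := by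
  have hdet : planarDet u v = Matrix.det (Matrix.of ![u, v]) := by
    simp [planarDet, Matrix.det_fin_two]
  rw [hdet, ← isUnit_iff_ne_zero, ← Matrix.isUnit_iff_isUnit_det,
    ← Matrix.linearIndependent_rows_iff_isUnit]
  rfl

lemma planarDet_swap (u v : Fin 2 → ℝ) : planarDet v u = -planarDet u v := by
  simp only [planarDet]
  ring

lemma one_lt_abs_planarDet (hu : IsLatticePoint u) (hv : IsLatticePoint v) (hu_neg : u 0 * u 1 < 0)
    (hv_pos : 0 < v 0 * v 1) : 1 < |planarDet u v| := by
  obtain ⟨a, b, rfl⟩ := isLatticePoint_iff_exists_pair.1 hu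
  obtain ⟨c, d, rfl⟩ := isLatticePoint_iff_exists_pair.1 hv
  simp only [planarDet, Matrix.cons_val] at hu_neg hv_pos ⊢
  norm_cast at hu_neg hv_pos ⊢
  have hopposite : (a * d) * (b * c) < 0 := by
    linarith [mul_neg_of_neg_of_pos hu_neg hv_pos]
  rw [lt_abs]
  rcases mul_neg_iff.1 hopposite with h | h
  · exact .inl (by linarith)
  · exact .inr (by linarith)

lemma planarDet_smul_eq (u v x : Fin 2 → ℝ) :
    planarDet u v • x = planarDet x v • u + planarDet u x • v := by
  ext i
  fin_cases i <;> simp [planarDet] <;> ring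

lemma planarDet_smul_add_smul (a b c d : ℝ) :
    planarDet (a • u + b • v) (c • u + d • v) = (a * d - b * c) * planarDet u v := by
  simp only [planarDet, Pi.add_apply, Pi.smul_apply, smul_eq_mul]
  ring

lemma IsTerminal.abs_planarDet_le_one (hP : IsTerminal P) (hconv : Convex ℝ P) (h0 : 0 ∈ P)
    (huP : u ∈ P) (hvP : v ∈ P) (hu : IsLatticePoint u) (hv : IsLatticePoint v) :
    |planarDet u v| ≤ 1 := by
  by_cases hdet : planarDet u v = 0
  · simp [hdet]
  have hempty : ∀ x ∈ convexHull ℝ {0, u, v}, x ∈ integerLattice 2 →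
      x ∈ ({0, u, v} : Set (Fin 2 → ℝ)) := fun x hxS hx =>
    hP.mem_of_mem_convexHull hconv (by simp [insert_subset_iff, h0, huP, hvP]) (by simp) hxS hx
  have hcoeff (x : Fin 2 → ℝ) (hx : IsLatticePoint x) :
      ∃ m n : ℤ, x = (m : ℝ) • u + (n : ℝ) • v := by
    have hcramer : x = (planarDet x v / planarDet u v) • u +
        (planarDet u x / planarDet u v) • v := by
      rw [div_eq_inv_mul, div_eq_inv_mul, mul_smul, mul_smul, ← smul_add, ← planarDet_smul_eq,
        inv_smul_smul₀ hdet]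
    obtain ⟨m, n, hm, hn⟩ := exists_int_coeff_of_empty_triangle (L := integerLattice 2)
      (linearIndependent_pair_iff_planarDet_ne_zero.2 hdet) hempty hu hv (hcramer ▸ hx)
    exact ⟨m, n, by rw [← hm, ← hn, ← hcramer]⟩
  obtain ⟨p, q, hpq⟩ := hcoeff ![1, 0] (isLatticePoint_iff_exists_pair.2 ⟨1, 0, by simp⟩)
  obtain ⟨r, s, hrs⟩ := hcoeff ![0, 1] (isLatticePoint_iff_exists_pair.2 ⟨0, 1, by simp⟩)
  obtain ⟨D, hD⟩ := hu.exists_planarDet_eq hv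
  have hdvd : (p * s - q * r) * D = 1 := by
    have hone : planarDet ![1, 0] ![0, 1] = 1 := by simp [planarDet]
    rw [hpq, hrs, planarDet_smul_add_smul, hD] at hone
    exact_mod_cast hone
  rw [hD]
  exact_mod_cast (Int.isUnit_iff_abs_eq.1 (.of_mul_eq_one_right _ hdvd)).le

end PlanarDet

section UnimodularAction

open Matrix

variable {d : ℕ} {P : Set (Fin d → ℝ)}

/-- The linear action of `SL(d, ℤ)` on `ℝ^d`, which preserves the lattice `ℤ^d`. -/
noncomputable def unimodularEquiv :
    SpecialLinearGroup (Fin d) ℤ →* (Fin d → ℝ) ≃ₗ[ℝ] (Fin d → ℝ) :=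
  SpecialLinearGroup.toLin'.comp (SpecialLinearGroup.map (Int.castRingHom ℝ))

lemma unimodularEquiv_apply (M : SpecialLinearGroup (Fin d) ℤ) (x : Fin d → ℝ) (i : Fin d) :
    unimodularEquiv M x i = ∑ j, (M i j : ℝ) * x j := rfl

lemma IsLatticePoint.map_unimodularEquiv {x : Fin d → ℝ} (hx : IsLatticePoint x)
    (M : SpecialLinearGroup (Fin d) ℤ) : IsLatticePoint (unimodularEquiv M x) := by
  obtain ⟨n, rfl⟩ := isLatticePoint_iff_exists_intCast.1 hx
  exact fun i => ⟨∑ j, M i j * n j, by simp [unimodularEquiv_apply]⟩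

lemma isLatticePoint_unimodularEquiv_iff {x : Fin d → ℝ} (M : SpecialLinearGroup (Fin d) ℤ) :
    IsLatticePoint (unimodularEquiv M x) ↔ IsLatticePoint x := by
  refine ⟨fun h => ?_, fun h => h.map_unimodularEquiv M⟩
  simpa [← LinearEquiv.mul_apply, ← map_mul] using h.map_unimodularEquiv M⁻¹

lemma IsLatticePolytope.image_unimodularEquiv (hP : IsLatticePolytope P)
    (M : SpecialLinearGroup (Fin d) ℤ) : IsLatticePolytope (unimodularEquiv M '' P) := by
  classical
  obtain ⟨S, hS, rfl⟩ := hP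
  refine ⟨S.image (unimodularEquiv M), ?_, ?_⟩
  · simpa using fun x hx => (hS x hx).map_unimodularEquiv M
  · rw [Finset.coe_image]
    exact (unimodularEquiv M).toLinearMap.image_convexHull _

lemma IsTerminal.image_unimodularEquiv (hP : IsTerminal P)
    (M : SpecialLinearGroup (Fin d) ℤ) : IsTerminal (unimodularEquiv M '' P) := by
  have hlattice : {x ∈ unimodularEquiv M '' P | IsLatticePoint x} =
      unimodularEquiv M '' {x ∈ P | IsLatticePoint x} := by
    ext x
    constructor
    · rintro ⟨⟨y, hy, rfl⟩, hx⟩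
      exact ⟨y, ⟨hy, (isLatticePoint_unimodularEquiv_iff M).1 hx⟩, rfl⟩
    · rintro ⟨y, ⟨hy, hyl⟩, rfl⟩
      exact ⟨mem_image_of_mem _ hy, hyl.map_unimodularEquiv M⟩
  rw [IsTerminal, hlattice, hP, image_union, image_extremePoints, image_singleton, map_zero]

lemma zero_mem_interior_image_unimodularEquiv (h0 : 0 ∈ interior P)
    (M : SpecialLinearGroup (Fin d) ℤ) : 0 ∈ interior (unimodularEquiv M '' P) := by
  have himage : interior (unimodularEquiv M '' P) = unimodularEquiv M '' interior P :=
    ((unimodularEquiv M).toContinuousLinearEquiv.toHomeomorph.image_interior P).symm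
  exact himage ▸ ⟨0, h0, map_zero _⟩

lemma unimodularEquiv_S (x : Fin 2 → ℝ) : unimodularEquiv S x = ![-x 1, x 0] := by
  ext i
  fin_cases i <;> simp [unimodularEquiv_apply, coe_S]

lemma unimodularEquiv_T (x : Fin 2 → ℝ) : unimodularEquiv T x = ![x 0 + x 1, x 1] := by
  ext i
  fin_cases i <;> simp [unimodularEquiv_apply, coe_T]

end UnimodularAction

/-- The type of terminal Fano polygons, ordered by inclusion and acted on by `SL(2, ℤ)`. -/
abbrev TerminalFanoPolygon := {P : Set (Fin 2 → ℝ) // IsTerminalFano P}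

lemma IsTerminalFano.image_unimodularEquiv {P : Set (Fin 2 → ℝ)} (hP : IsTerminalFano P)
    (M : SL(2, ℤ)) : IsTerminalFano (unimodularEquiv M '' P) :=
  have hterm := hP.2.image_unimodularEquiv M
  ⟨(hP.1.1.image_unimodularEquiv M).isFanoPolytope
    (zero_mem_interior_image_unimodularEquiv hP.1.2.1 M) hterm, hterm⟩

namespace TerminalFanoPolygon

variable {P Q : TerminalFanoPolygon} {x y : Fin 2 → ℝ}

noncomputable instance : MulAction SL(2, ℤ) TerminalFanoPolygon where
  smul M P := ⟨unimodularEquiv M '' P, P.2.image_unimodularEquiv M⟩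
  one_smul P := Subtype.ext (by change unimodularEquiv 1 '' _ = _; simp)
  mul_smul M N P := Subtype.ext (by
    change unimodularEquiv (M * N) '' _ = unimodularEquiv M '' (unimodularEquiv N '' _)
    rw [map_mul, ← image_comp]
    rfl)

lemma coe_smul (M : SL(2, ℤ)) (P : TerminalFanoPolygon) :
    ((M • P : TerminalFanoPolygon) : Set (Fin 2 → ℝ)) = unimodularEquiv M '' P := rfl

lemma smul_mono (M : SL(2, ℤ)) : Monotone fun P : TerminalFanoPolygon => M • P :=
  fun _ _ h => image_mono h

lemma mem_inv_smul_iff (M : SL(2, ℤ)) :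
    x ∈ (M⁻¹ • P : TerminalFanoPolygon).1 ↔ unimodularEquiv M x ∈ P.1 := by
  rw [coe_smul, map_inv]
  exact (unimodularEquiv M).toEquiv.symm.image_eq_preimage_symm P.1 ▸ Iff.rfl

lemma convex (P : TerminalFanoPolygon) : Convex ℝ P.1 := P.2.1.1.convex

lemma zero_mem (P : TerminalFanoPolygon) : 0 ∈ P.1 := interior_subset P.2.1.2.1

lemma abs_planarDet_le_one (hx : x ∈ P.1) (hy : y ∈ P.1) (hxl : IsLatticePoint x)
    (hyl : IsLatticePoint y) : |planarDet x y| ≤ 1 :=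
  P.2.2.abs_planarDet_le_one P.convex P.zero_mem hx hy hxl hyl

end TerminalFanoPolygon

section Eisenstein

variable {x : Fin 2 → ℝ}

/-- The norm form `N(x₀ + x₁ω)` of the Eisenstein integers, as a quadratic form on `ℝ²`. -/
def eisensteinNorm (x : Fin 2 → ℝ) : ℝ := x 0 ^ 2 - x 0 * x 1 + x 1 ^ 2

/-- The unit disk of the Eisenstein norm, an ellipse whose lattice points are the origin and the
six units of the Eisenstein integers, which lie on its boundary. -/
def eisensteinDisk : Set (Fin 2 → ℝ) := {x | eisensteinNorm x ≤ 1}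

lemma add_sq_le_two_mul_eisensteinNorm (x : Fin 2 → ℝ) :
    x 0 ^ 2 + x 1 ^ 2 ≤ 2 * eisensteinNorm x := by
  rw [eisensteinNorm]
  linarith [sq_nonneg (x 0 - x 1)]

lemma eisensteinNorm_le_one (h0 : |x 0| ≤ 1) (h1 : |x 1| ≤ 1) (h01 : 0 ≤ x 0 * x 1) :
    eisensteinNorm x ≤ 1 := by
  have habs : eisensteinNorm x = |x 0| ^ 2 - |x 0| * |x 1| + |x 1| ^ 2 := by
    rw [eisensteinNorm, ← abs_mul, abs_of_nonneg h01, sq_abs, sq_abs]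
  rw [habs]
  nlinarith [abs_nonneg (x 0), abs_nonneg (x 1)]

lemma eisensteinNorm_pos (hx : x ≠ 0) : 0 < eisensteinNorm x := by
  suffices 0 < x 0 ^ 2 + x 1 ^ 2 by linarith [add_sq_le_two_mul_eisensteinNorm x]
  rcases Fin.exists_fin_two.1 (Function.ne_iff.1 hx) with h | h
  · exact add_pos_of_pos_of_nonneg (sq_pos_of_ne_zero h) (sq_nonneg _)
  · exact add_pos_of_nonneg_of_pos (sq_nonneg _) (sq_pos_of_ne_zero h)

lemma IsLatticePoint.one_le_eisensteinNorm (hx : IsLatticePoint x) (hx0 : x ≠ 0) :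
    1 ≤ eisensteinNorm x := by
  obtain ⟨m, n, rfl⟩ := isLatticePoint_iff_exists_pair.1 hx
  have hcast : eisensteinNorm ![(m : ℝ), n] = ((m ^ 2 - m * n + n ^ 2 : ℤ) : ℝ) := by
    simp [eisensteinNorm]
  have hpos := eisensteinNorm_pos hx0
  rw [hcast] at hpos ⊢
  exact_mod_cast hpos

lemma strictConvexOn_eisensteinNorm : StrictConvexOn ℝ univ eisensteinNorm := by
  refine ⟨convex_univ, fun x _ y _ hxy a b ha hb hab => ?_⟩
  have hpos : 0 < a * b * eisensteinNorm (x - y) :=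
    mul_pos (mul_pos ha hb) (eisensteinNorm_pos (sub_ne_zero.2 hxy))
  have hgap : a * eisensteinNorm x + b * eisensteinNorm y - eisensteinNorm (a • x + b • y) =
      a * b * eisensteinNorm (x - y) := by
    obtain rfl := eq_sub_of_add_eq' hab
    simp only [eisensteinNorm, Pi.add_apply, Pi.sub_apply, Pi.smul_apply, smul_eq_mul]
    ring
  simp only [smul_eq_mul]
  linarith

lemma mem_extremePoints_sublevel_of_strictConvexOn {E : Type*} [AddCommGroup E] [Module ℝ E]
    {s : Set E} {f : E → ℝ} (hf : StrictConvexOn ℝ s f) {x : E} (hxs : x ∈ s) {c : ℝ}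
    (hx : f x = c) : x ∈ extremePoints ℝ {y ∈ s | f y ≤ c} := by
  refine ⟨⟨hxs, hx.le⟩, fun y hy z hz ⟨a, b, ha, hb, hab, hyz⟩ => ?_⟩
  by_contra! hne
  have hyz_ne : y ≠ z := by
    rintro rfl
    exact hne (by rw [← hyz, ← add_smul, hab, one_smul])
  have hlt : f x < c := calc
    f x = f (a • y + b • z) := by rw [hyz]
    _ < a * f y + b * f z := hf.2 hy.1 hz.1 hyz_ne ha hb hab
    _ ≤ a * c + b * c := by gcongr; exacts [hy.2, hz.2]
    _ = c := by rw [← add_mul, hab, one_mul]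
  exact hlt.ne hx

lemma convex_eisensteinDisk : Convex ℝ eisensteinDisk := by
  simpa [eisensteinDisk] using strictConvexOn_eisensteinNorm.convexOn.convex_le 1

lemma isBounded_eisensteinDisk : IsBounded eisensteinDisk := by
  refine (Metric.isBounded_closedBall (x := 0) (r := 2)).subset fun x hx => ?_
  have hsq : x 0 ^ 2 + x 1 ^ 2 ≤ 2 ^ 2 := by
    linarith [add_sq_le_two_mul_eisensteinNorm x, show eisensteinNorm x ≤ 1 from hx]
  rw [mem_closedBall_zero_iff, pi_norm_le_iff_of_nonneg zero_le_two, Fin.forall_fin_two]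
  exact ⟨abs_le_of_sq_le_sq (by linarith [sq_nonneg (x 1)]) zero_le_two,
    abs_le_of_sq_le_sq (by linarith [sq_nonneg (x 0)]) zero_le_two⟩

lemma latticePoints_eisensteinDisk_subset_extremePoints :
    {x ∈ eisensteinDisk | IsLatticePoint x} ⊆ extremePoints ℝ eisensteinDisk ∪ {0} := by
  rintro x ⟨hxD, hx⟩
  refine or_iff_not_imp_right.2 fun hx0 => ?_
  simpa [eisensteinDisk] using mem_extremePoints_sublevel_of_strictConvexOn
    strictConvexOn_eisensteinNorm (mem_univ x) (le_antisymm hxD (hx.one_le_eisensteinNorm hx0))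

lemma isTerminalFano_of_subset_eisensteinDisk {P : Set (Fin 2 → ℝ)} (hP : IsLatticePolytope P)
    (h0 : 0 ∈ interior P) (hsub : P ⊆ eisensteinDisk) : IsTerminalFano P :=
  have hterm := hP.isTerminal_of_subset (interior_subset h0) hsub
    latticePoints_eisensteinDisk_subset_extremePoints
  ⟨hP.isFanoPolytope h0 hterm, hterm⟩

end Eisenstein

lemma zero_mem_interior_of_forall_single_mem {ι : Type*} [Finite ι] [Nonempty ι] [DecidableEq ι]
    {C : Set (ι → ℝ)} (hC : Convex ℝ C)
    (h : ∀ i, Pi.single i 1 ∈ C ∧ Pi.single i (-1) ∈ C) : 0 ∈ interior C := by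
  cases nonempty_fintype ι
  have hcard : (0 : ℝ) < Fintype.card ι := by exact_mod_cast Fintype.card_pos
  have haxis (i : ι) {t : ℝ} (ht : |t| ≤ 1) : Pi.single i t ∈ C := by
    have hpre : Convex ℝ (LinearMap.single ℝ (fun _ : ι => ℝ) i ⁻¹' C) := hC.linear_preimage _
    exact hpre.ordConnected.out (h i).2 (h i).1 (abs_le.1 ht)
  rw [mem_interior_iff_mem_nhds]
  filter_upwards [Metric.closedBall_mem_nhds 0 (inv_pos.2 hcard)] with x hx
  have hmean : x = ∑ i, (Fintype.card ι : ℝ)⁻¹ • Pi.single i (Fintype.card ι * x i) := by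
    ext j
    simp [Finset.sum_apply, Pi.single_apply, hcard.ne']
  rw [hmean]
  refine hC.sum_mem (fun _ _ => by positivity) (by simp [hcard.ne']) fun i _ => haxis i ?_
  rw [abs_mul, abs_of_pos hcard, ← le_inv_mul_iff₀ hcard, mul_one]
  exact (norm_le_pi_norm x i).trans (mem_closedBall_zero_iff.1 hx)

/-- The vertices `±e₁, ±e₂` of the standard square. -/
def squareVertices : Set (Fin 2 → ℝ) := {![1, 0], ![-1, 0], ![0, 1], ![0, -1]}

lemma squareVertices_subset : squareVertices ⊆ {x ∈ eisensteinDisk | IsLatticePoint x} := by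
  have h (m n : ℤ) (hmn : m ^ 2 - m * n + n ^ 2 = 1) :
      ![(m : ℝ), n] ∈ {x ∈ eisensteinDisk | IsLatticePoint x} := by
    refine ⟨show eisensteinNorm _ ≤ 1 from ?_, isLatticePoint_iff_exists_pair.2 ⟨m, n, rfl⟩⟩
    simp only [eisensteinNorm, Matrix.cons_val]
    exact_mod_cast hmn.le
  rintro x (rfl | rfl | rfl | rfl)
  · simpa using h 1 0 (by simp)
  · simpa using h (-1) 0 (by simp)
  · simpa using h 0 1 (by simp)
  · simpa using h 0 (-1) (by simp)

lemma zero_mem_interior_convexHull_squareVertices :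
    0 ∈ interior (convexHull ℝ squareVertices) := by
  refine zero_mem_interior_of_forall_single_mem (convex_convexHull ℝ _) ?_
  rw [Fin.forall_fin_two]
  refine ⟨⟨?_, ?_⟩, ?_, ?_⟩ <;> apply subset_convexHull <;>
    simp [squareVertices, funext_iff, Fin.forall_fin_two]

namespace TerminalFanoPolygon

variable {P Q : TerminalFanoPolygon} {M N : SL(2, ℤ)}

/-- The standard square `conv(±e₁, ±e₂)`, the base point to which all terminal Fano polygons are
connected. -/
def square : TerminalFanoPolygon :=
  ⟨convexHull ℝ squareVertices, isTerminalFano_of_subset_eisensteinDisk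
    (isLatticePolytope_convexHull (by simp [squareVertices])
      fun _ hx => (squareVertices_subset hx).2)
    zero_mem_interior_convexHull_squareVertices
    (convexHull_min (fun _ hx => (squareVertices_subset hx).1) convex_eisensteinDisk)⟩

/-- The hexagon `conv(±e₁, ±e₂, ±(e₁ + e₂))`, which contains a unimodular image of every terminal
Fano polygon. It is defined as the lattice hull of `eisensteinDisk`. -/
def hexagon : TerminalFanoPolygon :=
  ⟨latticeHull eisensteinDisk, isTerminalFano_of_subset_eisensteinDisk
    (isLatticePolytope_latticeHull isBounded_eisensteinDisk)
    (interior_mono (convexHull_mono squareVertices_subset)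
      zero_mem_interior_convexHull_squareVertices)
    (convexHull_min (sep_subset _ _) convex_eisensteinDisk)⟩

lemma square_le_hexagon : square ≤ hexagon := convexHull_mono squareVertices_subset

lemma smul_square_le (h : ∀ x ∈ squareVertices, unimodularEquiv M x ∈ P.1) : M • square ≤ P :=
  image_subset_iff.2 <|
    convexHull_min h (P.convex.linear_preimage (unimodularEquiv M).toLinearMap)

lemma le_hexagon_of_eisensteinNorm_le_one
    (h : ∀ x ∈ P.1, IsLatticePoint x → eisensteinNorm x ≤ 1) : P ≤ hexagon :=
  P.2.1.1.subset_latticeHull h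

lemma S_smul_square_le_square : S • square ≤ square := by
  refine smul_square_le fun x hx => subset_convexHull ℝ _ ?_
  rw [unimodularEquiv_S]
  rcases hx with rfl | rfl | rfl | rfl <;> simp [squareVertices]

lemma T_smul_square_le_hexagon : T • square ≤ hexagon := by
  refine smul_square_le fun x hx => subset_convexHull ℝ _ ⟨?_, ?_⟩
  · rw [unimodularEquiv_T]
    rcases hx with rfl | rfl | rfl | rfl <;> simp [eisensteinDisk, eisensteinNorm]
  · exact (squareVertices_subset hx).2.map_unimodularEquiv T

lemma exists_planarDet_eq_one (P : TerminalFanoPolygon) :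
    ∃ u ∈ P.1, ∃ v ∈ P.1, IsLatticePoint u ∧ IsLatticePoint v ∧ planarDet u v = 1 := by
  obtain ⟨v, hv, hind⟩ := P.2.1.1.exists_linearIndependent ⟨0, P.2.1.2.1⟩
  have hne : planarDet (v 0) (v 1) ≠ 0 :=
    linearIndependent_pair_iff_planarDet_ne_zero.1 (by convert hind; ext i; fin_cases i <;> rfl)
  have hle := abs_planarDet_le_one (hv 0).1 (hv 1).1 (hv 0).2 (hv 1).2
  obtain ⟨D, hD⟩ := (hv 0).2.exists_planarDet_eq (hv 1).2
  rw [hD] at hne hle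
  have habs : |D| = 1 := le_antisymm (by exact_mod_cast hle)
    (Int.one_le_abs (by exact_mod_cast hne))
  rcases eq_or_eq_neg_of_abs_eq habs with rfl | rfl
  · exact ⟨_, (hv 0).1, _, (hv 1).1, (hv 0).2, (hv 1).2, by simp [hD]⟩
  · refine ⟨_, (hv 1).1, _, (hv 0).1, (hv 1).2, (hv 0).2, ?_⟩
    rw [planarDet_swap, hD]
    simp

lemma exists_smul_unitVectors_mem (P : TerminalFanoPolygon) :
    ∃ M : SL(2, ℤ), ![1, 0] ∈ (M • P).1 ∧ ![0, 1] ∈ (M • P).1 := by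
  obtain ⟨u, hu, v, hv, hul, hvl, huv⟩ := P.exists_planarDet_eq_one
  obtain ⟨a, b, rfl⟩ := isLatticePoint_iff_exists_pair.1 hul
  obtain ⟨c, d, rfl⟩ := isLatticePoint_iff_exists_pair.1 hvl
  have hdet : (!![a, c; b, d]).det = 1 := by
    rw [Matrix.det_fin_two_of]
    simp only [planarDet, Matrix.cons_val] at huv
    have : a * d - b * c = 1 := by exact_mod_cast huv
    linarith
  obtain ⟨M, hM⟩ : ∃ M : SL(2, ℤ), (M : Matrix (Fin 2) (Fin 2) ℤ) = !![a, c; b, d] :=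
    ⟨⟨_, hdet⟩, rfl⟩
  refine ⟨M⁻¹, (mem_inv_smul_iff M).2 ?_, (mem_inv_smul_iff M).2 ?_⟩
  · convert hu
    ext i
    fin_cases i <;> simp [unimodularEquiv_apply, hM]
  · convert hv
    ext i
    fin_cases i <;> simp [unimodularEquiv_apply, hM]

lemma abs_coord_le_one (h₁ : ![1, 0] ∈ P.1) (h₂ : ![0, 1] ∈ P.1) {x : Fin 2 → ℝ} (hx : x ∈ P.1)
    (hxl : IsLatticePoint x) : |x 0| ≤ 1 ∧ |x 1| ≤ 1 := by
  have hl₁ : IsLatticePoint ![1, 0] := isLatticePoint_iff_exists_pair.2 ⟨1, 0, by simp⟩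
  have hl₂ : IsLatticePoint ![0, 1] := isLatticePoint_iff_exists_pair.2 ⟨0, 1, by simp⟩
  exact ⟨by simpa [planarDet] using abs_planarDet_le_one hx h₂ hxl hl₂,
    by simpa [planarDet] using abs_planarDet_le_one h₁ hx hl₁ hxl⟩

lemma le_hexagon_or_S_smul_le_hexagon (h₁ : ![1, 0] ∈ P.1) (h₂ : ![0, 1] ∈ P.1) :
    P ≤ hexagon ∨ S • P ≤ hexagon := by
  by_cases hsign : ∀ x ∈ P.1, IsLatticePoint x → 0 ≤ x 0 * x 1
  · refine .inl <| le_hexagon_of_eisensteinNorm_le_one fun x hx hxl => ?_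
    have hx1 := abs_coord_le_one h₁ h₂ hx hxl
    exact eisensteinNorm_le_one hx1.1 hx1.2 (hsign x hx hxl)
  · push Not at hsign
    obtain ⟨y, hy, hyl, hy_neg⟩ := hsign
    refine .inr <| le_hexagon_of_eisensteinNorm_le_one ?_
    rintro _ ⟨x, hx, rfl⟩ hxl
    rw [isLatticePoint_unimodularEquiv_iff] at hxl
    have hx1 := abs_coord_le_one h₁ h₂ hx hxl
    have hx_sign : x 0 * x 1 ≤ 0 := by
      by_contra! hx_pos
      exact (one_lt_abs_planarDet hyl hxl hy_neg hx_pos).not_ge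
        (abs_planarDet_le_one hy hx hyl hxl)
    rw [unimodularEquiv_S]
    apply eisensteinNorm_le_one <;> simp [hx1, hx_sign, mul_comm (x 1)]

lemma exists_smul_le_hexagon (P : TerminalFanoPolygon) : ∃ M : SL(2, ℤ), M • P ≤ hexagon := by
  obtain ⟨M, h₁, h₂⟩ := P.exists_smul_unitVectors_mem
  rcases le_hexagon_or_S_smul_le_hexagon h₁ h₂ with h | h
  · exact ⟨M, h⟩
  · exact ⟨S * M, by rwa [mul_smul]⟩

/-- The graph on terminal Fano polygons whose edges are the proper inclusions, so that its walks
are the chains of inclusions. -/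
def inclusionGraph : SimpleGraph TerminalFanoPolygon := SimpleGraph.fromRel (· ≤ ·)

lemma reachable_of_le (h : P ≤ Q) : inclusionGraph.Reachable P Q := by
  rcases eq_or_ne P Q with rfl | hne
  · rfl
  · exact ((SimpleGraph.fromRel_adj ..).2 ⟨hne, .inl h⟩).reachable

lemma reachable_smul (M : SL(2, ℤ)) (h : inclusionGraph.Reachable P Q) :
    inclusionGraph.Reachable (M • P) (M • Q) := by
  refine h.map (G' := inclusionGraph) ⟨(M • ·), fun {A B} hAB => ?_⟩
  obtain ⟨hne, hle⟩ := (SimpleGraph.fromRel_adj ..).1 hAB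
  exact (SimpleGraph.fromRel_adj ..).2
    ⟨(MulAction.injective M).ne hne, hle.imp (smul_mono M ·) (smul_mono M ·)⟩

lemma reachable_square_smul_square (M : SL(2, ℤ)) :
    inclusionGraph.Reachable square (M • square) := by
  have hM : M ∈ Subgroup.closure {S, T} := by
    simp [SpecialLinearGroup.SL2Z_generators]
  induction hM using Subgroup.closure_induction with
  | mem M hM =>
    rcases hM with rfl | rfl
    · exact (reachable_of_le S_smul_square_le_square).symm
    · exact (reachable_of_le square_le_hexagon).trans
        (reachable_of_le T_smul_square_le_hexagon).symm
  | one => rw [one_smul]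
  | mul M N _ _ hM hN => simpa only [mul_smul] using hM.trans (reachable_smul M hN)
  | inv M _ hM => simpa only [inv_smul_smul] using (reachable_smul M⁻¹ hM).symm

lemma reachable_square (P : TerminalFanoPolygon) : inclusionGraph.Reachable square P := by
  obtain ⟨M, hM⟩ := P.exists_smul_le_hexagon
  have hMP : inclusionGraph.Reachable square (M • P) :=
    (reachable_of_le square_le_hexagon).trans (reachable_of_le hM).symm
  simpa only [inv_smul_smul] using
    (reachable_square_smul_square M⁻¹).trans (reachable_smul M⁻¹ hMP)

lemma inclusionGraph_preconnected : inclusionGraph.Preconnected :=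
  fun P Q => (reachable_square P).symm.trans (reachable_square Q)

end TerminalFanoPolygon

/-- Any two terminal Fano polygons in `ℤ²` (not merely up to unimodular
equivalence) are connected by a finite chain of terminal Fano polygons in which each
consecutive pair is related by inclusion. -/
theorem terminal_fano_connected (P Q : Set (Fin 2 → ℝ))
    (hP : IsTerminalFano P) (hQ : IsTerminalFano Q) :
    ∃ (k : ℕ) (c : ℕ → Set (Fin 2 → ℝ)), c 0 = P ∧ c k = Q ∧
      (∀ i ≤ k, IsTerminalFano (c i)) ∧
      ∀ i < k, c i ⊆ c (i+1) ∨ c (i+1) ⊆ c i := by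
  obtain ⟨w⟩ := TerminalFanoPolygon.inclusionGraph_preconnected ⟨P, hP⟩ ⟨Q, hQ⟩
  refine ⟨w.length, fun i => w.getVert i, ?_, ?_, fun i _ => (w.getVert i).2, fun i hi => ?_⟩
  · exact congrArg Subtype.val w.getVert_zero
  · exact congrArg Subtype.val w.getVert_length
  · exact ((SimpleGraph.fromRel_adj ..).1 (w.adj_getVert_succ hi)).2
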